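/- Let p be an odd prime, n ≥ 1, q = p^(2^n), and G = PGL₂(F_q). If x ∈ G is an involution not lying in the image of SL₂(F_q) in G, then the centralizer C_G(x) is isomorphic to the dihedral group of order 2(q+1). -/

import Mathlib

open Matrix

/-- `PGL₂(F)`: the projective general linear group, i.e. the quotient of `GL₂(F)`
by its center. -/
abbrev ProjectiveGL2 (F : Type) [Field F] : Type :=
  Matrix.GeneralLinearGroup (Fin 2) F ⧸ Subgroup.center (Matrix.GeneralLinearGroup (Fin 2) F)

/-- The image of the natural map `SL₂(F) → PGL₂(F)`: the socle of `PGL₂(F)`,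
isomorphic to `PSL₂(F)`. -/
def socleSL2 (F : Type) [Field F] : Subgroup (ProjectiveGL2 F) :=
  ((QuotientGroup.mk' (Subgroup.center (Matrix.GeneralLinearGroup (Fin 2) F))).comp
    Matrix.SpecialLinearGroup.toGL).range

/-!
Lift the involution to `A ∈ GL₂(F)`. Cayley–Hamilton shows that `A` has trace `0`, and since
`-1` is a square while `det A` is not, `-det A` is not a square, so `A` generates a quadratic
extension `K = F[A]` of `F` inside `M₂(F)`. An element of `GL₂(F)` commutes with `A` modulo
scalars if and only if it commutes or anticommutes with `A`. The commuting elements form `Kˣ`,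
with image `Kˣ / Fˣ` in `PGL₂(F)`, a cyclic group of order `q + 1`. The anticommuting ones have
trace `0`, hence are involutions in `PGL₂(F)`, and they make up the nontrivial coset of
`Kˣ / Fˣ`.
-/

section DihedralRecognition

variable {G : Type*} [Group G] {C : Subgroup G}

theorem mul_eq_mul_inv_of_forall_notMem_mul_self_eq_one (hC : ∀ g ∉ C, g * g = 1)
    {s c : G} (hs : s ∉ C) (hc : c ∈ C) : c * s = s * c⁻¹ := by
  have hsc : s * c ∉ C := fun h => hs ((Subgroup.mul_mem_cancel_right C hc).1 h)
  calc c * s = s * s * (c * s) := by rw [hC s hs, one_mul]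
    _ = s * (s * c * (s * c)) * c⁻¹ := by group
    _ = s * c⁻¹ := by rw [hC _ hsc, mul_one]

theorem nonempty_mulEquiv_dihedralGroup_of_index_eq_two [IsCyclic C] (hindex : C.index = 2)
    (hC : ∀ g ∉ C, g * g = 1) : Nonempty (G ≃* DihedralGroup (Nat.card C)) := by
  obtain ⟨s, hs, hcoset⟩ := Subgroup.index_eq_two_iff_exists_notMem_and'.1 hindex
  have hss : s * s = 1 := hC s hs
  let e : Multiplicative (ZMod (Nat.card C)) ≃* C := zmodCyclicMulEquiv inferInstance
  let ρ (i : ZMod (Nat.card C)) : C := e (.ofAdd i)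
  have hρ_add (i j) : ρ (i + j) = ρ i * ρ j := map_mul e _ _
  have hρ_sub (i j) : ρ (j - i) = (ρ i)⁻¹ * ρ j :=
    eq_inv_mul_of_mul_eq (by rw [← hρ_add, add_sub_cancel])
  have hcomm (i) : (ρ i : G) * s = s * (ρ i : G)⁻¹ :=
    mul_eq_mul_inv_of_forall_notMem_mul_self_eq_one hC hs (ρ i).2
  let f : DihedralGroup (Nat.card C) →* G := .mk'
    (fun
      | .r i => ρ i
      | .sr i => s * ρ i)
    (by
      rintro (i | i) (j | j)
      · simp only [DihedralGroup.r_mul_r, hρ_add, Subgroup.coe_mul]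
      · simp only [DihedralGroup.r_mul_sr, hρ_sub, Subgroup.coe_mul, Subgroup.coe_inv,
          ← mul_assoc, hcomm]
      · simp only [DihedralGroup.sr_mul_r, hρ_add, Subgroup.coe_mul, mul_assoc]
      · simp only [DihedralGroup.sr_mul_sr, hρ_sub, Subgroup.coe_mul, Subgroup.coe_inv]
        rw [mul_assoc, ← mul_assoc _ s, hcomm, ← mul_assoc, ← mul_assoc, hss, one_mul])
  have hinj : Function.Injective f := by
    refine (injective_iff_map_eq_one f).2 ?_
    rintro (i | i) h
    · have hi : ρ i = 1 := Subtype.ext h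
      have : Multiplicative.ofAdd i = 1 := (map_eq_one_iff e e.injective).1 hi
      exact congrArg DihedralGroup.r this
    · exact absurd ((eq_inv_of_mul_eq_one_left h).symm ▸ C.inv_mem (ρ i).2) hs
  have hsurj : Function.Surjective f := by
    intro g
    rcases hcoset g with hg | hg
    · obtain ⟨i, hi⟩ := e.surjective ⟨s * g, hg⟩
      refine ⟨.sr i.toAdd, ?_⟩
      change s * (e i : G) = g
      rw [hi, ← mul_assoc, hss, one_mul]
    · obtain ⟨i, hi⟩ := e.surjective ⟨g, hg⟩
      exact ⟨.r i.toAdd, congrArg Subtype.val hi⟩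
  exact ⟨(MulEquiv.ofBijective f ⟨hinj, hsurj⟩).symm⟩

end DihedralRecognition

section TwoByTwoMatrices

theorem mul_self_eq_neg_det_smul_one_add_trace_smul {R : Type*} [CommRing R]
    (A : Matrix (Fin 2) (Fin 2) R) : A * A = -A.det • 1 + A.trace • A := by
  ext i j
  fin_cases i <;> fin_cases j <;>
    simp [Matrix.mul_apply, Matrix.det_fin_two, Matrix.trace_fin_two] <;> ring

/-- The homomorphism `R[ω] → M₂(R)`, `ω ↦ A`, where `ω` is a formal root of the characteristic
polynomial of `A`; its image is the subalgebra `R[A]`. -/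
def quadraticAlgHom {R : Type*} [CommRing R] (A : Matrix (Fin 2) (Fin 2) R) :
    QuadraticAlgebra R (-A.det) A.trace →ₐ[R] Matrix (Fin 2) (Fin 2) R :=
  QuadraticAlgebra.lift ⟨A, mul_self_eq_neg_det_smul_one_add_trace_smul A⟩

theorem quadraticAlgHom_apply {R : Type*} [CommRing R] (A : Matrix (Fin 2) (Fin 2) R)
    (z : QuadraticAlgebra R (-A.det) A.trace) :
    quadraticAlgHom A z = z.re • 1 + z.im • A :=
  rfl

theorem commute_quadraticAlgHom {R : Type*} [CommRing R] (A : Matrix (Fin 2) (Fin 2) R)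
    (z : QuadraticAlgebra R (-A.det) A.trace) : Commute (quadraticAlgHom A z) A :=
  ((Commute.one_left A).smul_left z.re).add_left ((Commute.refl A).smul_left z.im)

theorem exists_quadraticAlgHom_eq_of_commute {F : Type*} [Field F]
    {A B : Matrix (Fin 2) (Fin 2) F} (hA : A 1 0 ≠ 0) (h : Commute B A) :
    ∃ z, quadraticAlgHom A z = B := by
  have h00 := congrFun₂ h.eq 0 0
  have h10 := congrFun₂ h.eq 1 0
  simp only [Matrix.mul_apply, Fin.sum_univ_two] at h00 h10
  refine ⟨⟨B 0 0 - B 1 0 / A 1 0 * A 0 0, B 1 0 / A 1 0⟩, ?_⟩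
  rw [quadraticAlgHom_apply]
  ext i j
  fin_cases i <;> fin_cases j <;> simp <;> field_simp
  · linear_combination -h00
  · linear_combination -h10

theorem trace_eq_zero_of_mul_eq_neg_mul {n R : Type*} [Fintype n] [DecidableEq n]
    [CommRing R] [NoZeroDivisors R] [NeZero (2 : R)]
    {A : GL n R} {B : Matrix n n R} (h : B * A.val = -(A.val * B)) : B.trace = 0 := by
  have htrace : B.trace = -B.trace := calc
    B.trace = (A.val * B * A⁻¹.val).trace := by rw [Matrix.trace_units_conj]
    _ = (-(B * A.val) * A⁻¹.val).trace := by rw [h, neg_neg]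
    _ = -B.trace := by rw [neg_mul, mul_assoc, Units.mul_inv, mul_one, Matrix.trace_neg]
  refine (mul_eq_zero.1 ?_).resolve_left (NeZero.ne (2 : R))
  linear_combination htrace

end TwoByTwoMatrices

section FiniteFields

variable {F : Type*} [Field F]

theorem two_ne_zero_of_not_isSquare [Finite F] {a : F} (ha : ¬IsSquare a) : (2 : F) ≠ 0 :=
  Ring.two_ne_zero fun h => ha (FiniteField.isSquare_of_char_two h a)

theorem isSquare_neg_one_of_isSquare_card [Fintype F] (h : IsSquare (Fintype.card F)) :
    IsSquare (-1 : F) := by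
  obtain ⟨m, hm⟩ := h
  rw [FiniteField.isSquare_neg_one_iff, hm, Nat.mul_mod]
  have : m % 4 < 4 := Nat.mod_lt _ (by norm_num)
  interval_cases m % 4 <;> decide

end FiniteFields

namespace ProjectiveGL2

variable {F : Type} [Field F]

theorem mk_eq_one_iff_exists_eq_smul_one {g : GL (Fin 2) F} :
    (g : ProjectiveGL2 F) = 1 ↔ ∃ a : F, g.val = a • 1 := by
  rw [QuotientGroup.eq_one_iff, Matrix.GeneralLinearGroup.mem_center_iff_val_mem_range_scalar]
  simp only [Set.mem_range, Matrix.scalar_apply, Matrix.smul_one_eq_diagonal, eq_comm]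

theorem mk_eq_mk_iff_exists_eq_smul {g h : GL (Fin 2) F} :
    (g : ProjectiveGL2 F) = h ↔ ∃ a : F, h.val = a • g.val := by
  rw [eq_comm, ← mul_inv_eq_one, ← QuotientGroup.mk_inv, ← QuotientGroup.mk_mul,
    mk_eq_one_iff_exists_eq_smul_one]
  refine exists_congr fun a => ?_
  rw [Units.val_mul, Units.mul_inv_eq_iff_eq_mul, smul_one_mul]

theorem mk_mem_socleSL2_of_isSquare_det {g : GL (Fin 2) F} (h : IsSquare g.val.det) :
    (g : ProjectiveGL2 F) ∈ socleSL2 F := by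
  obtain ⟨t, ht⟩ := h
  have ht0 : t ≠ 0 := by
    rintro rfl
    exact (Matrix.isUnits_det_units g).ne_zero (by rw [ht, zero_mul])
  have hdet : (t⁻¹ • g.val).det = 1 := by
    rw [Matrix.det_smul, ht, Fintype.card_fin]
    field_simp
  refine ⟨⟨t⁻¹ • g.val, hdet⟩, mk_eq_mk_iff_exists_eq_smul.2 ⟨t, ?_⟩⟩
  exact (smul_inv_smul₀ ht0 g.val).symm

theorem mk_mul_self_eq_one_iff {g : GL (Fin 2) F} :
    (g : ProjectiveGL2 F) * g = 1 ↔ g.val.trace = 0 ∨ (g : ProjectiveGL2 F) = 1 := by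
  have hsq := mul_self_eq_neg_det_smul_one_add_trace_smul g.val
  constructor
  · rw [← QuotientGroup.mk_mul, mk_eq_one_iff_exists_eq_smul_one, mk_eq_one_iff_exists_eq_smul_one,
      or_iff_not_imp_left, Units.val_mul, hsq]
    rintro ⟨a, ha⟩ htrace
    refine ⟨g.val.trace⁻¹ * (a + g.val.det), ?_⟩
    rw [mul_smul, eq_inv_smul_iff₀ htrace, add_smul, ← ha]
    module
  · rintro (htrace | hg)
    · rw [← QuotientGroup.mk_mul, mk_eq_one_iff_exists_eq_smul_one]
      exact ⟨-g.val.det, by rw [Units.val_mul, hsq, htrace, zero_smul, add_zero]⟩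
    · rw [hg, mul_one]

theorem mk_mem_centralizer_mk_iff {g A : GL (Fin 2) F} :
    (g : ProjectiveGL2 F) ∈ Subgroup.centralizer {(A : ProjectiveGL2 F)} ↔
      g.val * A.val = A.val * g.val ∨ g.val * A.val = -(A.val * g.val) := by
  rw [Subgroup.mem_centralizer_singleton_iff, eq_comm, ← QuotientGroup.mk_mul,
    ← QuotientGroup.mk_mul, mk_eq_mk_iff_exists_eq_smul, Units.val_mul, Units.val_mul]
  constructor
  · rintro ⟨t, ht⟩
    have hdet : A.val.det * g.val.det ≠ 0 :=
      mul_ne_zero (Matrix.isUnits_det_units A).ne_zero (Matrix.isUnits_det_units g).ne_zero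
    -- Compare determinants in `g * A = t • (A * g)`.
    have htsq : t ^ 2 = 1 := by
      have := congrArg Matrix.det ht
      rw [Matrix.det_smul, Matrix.det_mul, Matrix.det_mul, Fintype.card_fin] at this
      apply mul_right_cancel₀ hdet
      linear_combination -this
    rcases sq_eq_one_iff.1 htsq with rfl | rfl
    · exact .inl (by rw [ht, one_smul])
    · exact .inr (by rw [ht, neg_one_smul])
  · rintro (h | h)
    · exact ⟨1, by rw [h, one_smul]⟩
    · exact ⟨-1, by rw [h, neg_one_smul]⟩

/-- The image in `PGL₂(F)` of the centralizer of `A` in `GL₂(F)`. When `A` has no eigenvalue in `F`,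
this is the nonsplit torus `Kˣ / Fˣ` attached to the field `K = F[A]`. -/
def torus (A : GL (Fin 2) F) : Subgroup (ProjectiveGL2 F) :=
  (Subgroup.centralizer {A}).map (QuotientGroup.mk' _)

theorem mk_mem_torus_iff {g A : GL (Fin 2) F} :
    (g : ProjectiveGL2 F) ∈ torus A ↔ g.val * A.val = A.val * g.val := by
  have hcenter : Subgroup.center (GL (Fin 2) F) ≤ Subgroup.centralizer {A} :=
    Subgroup.center_le_centralizer _
  rw [torus, ← QuotientGroup.mk'_apply, ← Subgroup.mem_comap, Subgroup.comap_map_eq_self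
    (by rwa [QuotientGroup.ker_mk']), Subgroup.mem_centralizer_singleton_iff, Units.ext_iff,
    Units.val_mul, Units.val_mul]

theorem torus_le_centralizer (A : GL (Fin 2) F) :
    torus A ≤ Subgroup.centralizer {(A : ProjectiveGL2 F)} := by
  intro x hx
  induction x using QuotientGroup.induction_on with | H g => ?_
  exact mk_mem_centralizer_mk_iff.2 (.inl (mk_mem_torus_iff.1 hx))

theorem mul_eq_neg_mul_of_notMem_torus {g A : GL (Fin 2) F}
    (hg : (g : ProjectiveGL2 F) ∈ Subgroup.centralizer {(A : ProjectiveGL2 F)})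
    (hgA : (g : ProjectiveGL2 F) ∉ torus A) : g.val * A.val = -(A.val * g.val) :=
  (mk_mem_centralizer_mk_iff.1 hg).resolve_left fun h => hgA (mk_mem_torus_iff.2 h)

theorem mul_self_eq_one_of_notMem_torus [NeZero (2 : F)] {A : GL (Fin 2) F}
    {x : ProjectiveGL2 F} (hx : x ∈ Subgroup.centralizer {(A : ProjectiveGL2 F)})
    (hxA : x ∉ torus A) : x * x = 1 := by
  induction x using QuotientGroup.induction_on with | H g => ?_
  exact mk_mul_self_eq_one_iff.2 <| .inl <|
    trace_eq_zero_of_mul_eq_neg_mul (mul_eq_neg_mul_of_notMem_torus hx hxA)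

theorem exists_mul_eq_neg_mul_of_trace_eq_zero {A : GL (Fin 2) F} (hA : A 1 0 ≠ 0)
    (htrace : A.val.trace = 0) : ∃ s : GL (Fin 2) F, s.val * A.val = -(A.val * s.val) := by
  -- `s` is `A 1 0` times the linear map fixing `e₁` and negating `A e₁`, i.e. the Galois
  -- conjugation of `F[A] ≃ F[A] e₁`.
  let s : GL (Fin 2) F := .mkOfDetNeZero !![A 1 0, -2 * A 0 0; 0, -A 1 0]
    (by simpa [Matrix.det_fin_two] using hA)
  have h11 : A 1 1 = -A 0 0 := by
    rw [Matrix.trace_fin_two] at htrace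
    linear_combination htrace
  refine ⟨s, ?_⟩
  change !![A 1 0, -2 * A 0 0; 0, -A 1 0] * A.val = -(A.val * !![A 1 0, -2 * A 0 0; 0, -A 1 0])
  ext i j
  fin_cases i <;> fin_cases j <;> simp [Matrix.mul_apply, Fin.sum_univ_two, h11] <;> ring

theorem relIndex_torus_centralizer [NeZero (2 : F)] {A : GL (Fin 2) F} (hA : A 1 0 ≠ 0)
    (htrace : A.val.trace = 0) :
    (torus A).relIndex (Subgroup.centralizer {(A : ProjectiveGL2 F)}) = 2 := by
  obtain ⟨s, hs⟩ := exists_mul_eq_neg_mul_of_trace_eq_zero hA htrace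
  refine Subgroup.relIndex_eq_two_iff_exists_notMem_and.2
    ⟨s, mk_mem_centralizer_mk_iff.2 (.inr hs), fun hsA => ?_, fun x hx => ?_⟩
  · have hAs : (2 : F) • (A * s).val = 0 := by
      rw [mk_mem_torus_iff, hs, neg_eq_iff_add_eq_zero] at hsA
      rwa [two_smul]
    exact (A * s).ne_zero ((smul_eq_zero.1 hAs).resolve_left two_ne_zero)
  · refine or_iff_not_imp_right.2 fun hxA => ?_
    induction x using QuotientGroup.induction_on with | H g => ?_
    have hg := mul_eq_neg_mul_of_notMem_torus hx hxA
    rw [← QuotientGroup.mk_mul, mk_mem_torus_iff, Units.val_mul]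
    rw [mul_assoc, hs, mul_neg, ← mul_assoc, hg, neg_mul, neg_neg, mul_assoc]

/-- The homomorphism `Kˣ → GL₂(F) → PGL₂(F)`, where `K = F[ω]` acts on `F²` with `ω` acting as
`A`. -/
def quadraticUnitsHom (A : GL (Fin 2) F) :
    (QuadraticAlgebra F (-A.val.det) A.val.trace)ˣ →* ProjectiveGL2 F :=
  (QuotientGroup.mk' _).comp (Units.map (quadraticAlgHom A.val : _ →* _))

theorem ker_quadraticUnitsHom {A : GL (Fin 2) F} (hA : A 1 0 ≠ 0) :
    (quadraticUnitsHom A).ker =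
      (Units.map
        (algebraMap F (QuadraticAlgebra F (-A.val.det) A.val.trace)).toMonoidHom).range := by
  ext k
  have hk : quadraticUnitsHom A k = 1 ↔ ∃ a : F, quadraticAlgHom A.val k = a • 1 :=
    mk_eq_one_iff_exists_eq_smul_one
  rw [MonoidHom.mem_ker, hk, MonoidHom.mem_range]
  constructor
  · rintro ⟨a, ha⟩
    have him : k.val.im = 0 := by
      have := congrFun₂ ha 1 0
      simpa [quadraticAlgHom_apply, hA] using this
    have hre : k.val.re ≠ 0 := fun hre => k.ne_zero (QuadraticAlgebra.ext hre him)
    exact ⟨Units.mk0 _ hre, Units.ext (QuadraticAlgebra.ext rfl him.symm)⟩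
  · rintro ⟨u, rfl⟩
    exact ⟨u, ((quadraticAlgHom A.val).commutes u.val).trans (Algebra.algebraMap_eq_smul_one _)⟩

section NoEigenvalue

variable {A : GL (Fin 2) F}

theorem apply_one_zero_ne_zero_of_forall_sq_ne
    (hA : ∀ r : F, r ^ 2 ≠ -A.val.det + A.val.trace * r) : A 1 0 ≠ 0 := by
  intro h
  apply hA (A 0 0)
  rw [Matrix.det_fin_two, Matrix.trace_fin_two, h]
  ring

variable [hA : Fact (∀ r : F, r ^ 2 ≠ -A.val.det + A.val.trace * r)]

theorem range_quadraticUnitsHom : (quadraticUnitsHom A).range = torus A := by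
  ext x
  induction x using QuotientGroup.induction_on with | H g => ?_
  constructor
  · rintro ⟨k, hk⟩
    rw [← hk]
    exact mk_mem_torus_iff.2 (commute_quadraticAlgHom A.val k.val)
  · intro hg
    obtain ⟨z, hz⟩ := exists_quadraticAlgHom_eq_of_commute
      (apply_one_zero_ne_zero_of_forall_sq_ne hA.out) (mk_mem_torus_iff.1 hg)
    have hz0 : z ≠ 0 := by
      rintro rfl
      exact g.ne_zero (by rw [← hz, map_zero])
    exact ⟨Units.mk0 z hz0, congrArg (QuotientGroup.mk' _) (Units.ext hz)⟩

variable [Finite F]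

theorem isCyclic_torus : IsCyclic (torus A) := by
  have : Finite (QuadraticAlgebra F (-A.val.det) A.val.trace) := Module.finite_of_finite F
  rw [← range_quadraticUnitsHom]
  exact isCyclic_of_surjective _ (quadraticUnitsHom A).rangeRestrict_surjective

theorem card_torus : Nat.card (torus A) = Nat.card F + 1 := by
  have hker : Nat.card (quadraticUnitsHom A).ker = Nat.card F - 1 := by
    rw [ker_quadraticUnitsHom (apply_one_zero_ne_zero_of_forall_sq_ne hA.out), ← Nat.card_units]
    exact (Nat.card_congr (MonoidHom.ofInjective
      (Units.map_injective (algebraMap F _).injective)).toEquiv).symm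
  have hunits : Nat.card (QuadraticAlgebra F (-A.val.det) A.val.trace)ˣ =
      (Nat.card F + 1) * (Nat.card F - 1) := by
    rw [Nat.card_units, Module.natCard_eq_pow_finrank (K := F), QuadraticAlgebra.finrank_eq_two,
      ← Nat.sq_sub_sq, one_pow]
  have hpos : 0 < Nat.card F - 1 := Nat.sub_pos_of_lt Finite.one_lt_card
  apply Nat.eq_of_mul_eq_mul_right hpos
  rw [← hunits, ← hker, ← range_quadraticUnitsHom, ← Subgroup.index_ker, Subgroup.index_mul_card]

end NoEigenvalue

theorem nonempty_centralizer_mk_mulEquiv_dihedralGroup [Finite F] {A : GL (Fin 2) F}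
    (htrace : A.val.trace = 0) (hdet : ¬IsSquare (-A.val.det)) :
    Nonempty (Subgroup.centralizer {(A : ProjectiveGL2 F)} ≃* DihedralGroup (Nat.card F + 1)) := by
  have : NeZero (2 : F) := ⟨two_ne_zero_of_not_isSquare hdet⟩
  have : Fact (∀ r : F, r ^ 2 ≠ -A.val.det + A.val.trace * r) :=
    ⟨fun r hr => hdet ⟨r, by linear_combination -hr - r * htrace⟩⟩
  have hA : A 1 0 ≠ 0 := apply_one_zero_ne_zero_of_forall_sq_ne Fact.out
  let C := (torus A).subgroupOf (Subgroup.centralizer {(A : ProjectiveGL2 F)})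
  let e : C ≃* torus A := Subgroup.subgroupOfEquivOfLe (torus_le_centralizer A)
  have : IsCyclic C := e.isCyclic.2 isCyclic_torus
  have hcard : Nat.card C = Nat.card F + 1 := (Nat.card_congr e.toEquiv).trans card_torus
  rw [← hcard]
  exact nonempty_mulEquiv_dihedralGroup_of_index_eq_two (relIndex_torus_centralizer hA htrace)
    fun x hx => Subtype.ext (mul_self_eq_one_of_notMem_torus x.2 hx)

end ProjectiveGL2

open ProjectiveGL2 in
theorem centralizer_outer_involution_isDihedral_general {F : Type} [Field F] [Finite F]
    (hF : IsSquare (-1 : F)) (x : ProjectiveGL2 F) (hx : orderOf x = 2)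
    (hxS : x ∉ socleSL2 F) :
    Nonempty (Subgroup.centralizer {x} ≃* DihedralGroup (Nat.card F + 1)) := by
  induction x using QuotientGroup.induction_on with | H A => ?_
  have hAA : (A : ProjectiveGL2 F) * A = 1 := by
    rw [← sq, ← orderOf_dvd_iff_pow_eq_one, hx]
  have hA : (A : ProjectiveGL2 F) ≠ 1 := fun h => hxS (h ▸ one_mem _)
  refine nonempty_centralizer_mk_mulEquiv_dihedralGroup
    ((mk_mul_self_eq_one_iff.1 hAA).resolve_right hA) fun hdet => ?_
  exact hxS (mk_mem_socleSL2_of_isSquare_det (by simpa using hF.mul hdet))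

/-- The centralizer of an outer involution of `PGL₂(q)`, `q = p^(2^n)`, is dihedral
of order `2(q+1)`. -/
theorem centralizer_outer_involution_isDihedral (p n : ℕ) (hp : Nat.Prime p) (hodd : Odd p) (hn : 1 ≤ n)
    (F : Type) [Field F] [Fintype F] (hF : Fintype.card F = p ^ 2 ^ n)
    (x : ProjectiveGL2 F) (hx : orderOf x = 2) (hxS : x ∉ socleSL2 F) :
    Nonempty (Subgroup.centralizer {x} ≃* DihedralGroup (p ^ 2 ^ n + 1)) := by
  have hsq : IsSquare (Fintype.card F) := hF ▸ (even_two.pow_of_ne_zero (by omega)).isSquare_pow p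
  rw [← hF, ← Nat.card_eq_fintype_card]
  exact centralizer_outer_involution_isDihedral_general
    (isSquare_neg_one_of_isSquare_card hsq) x hx hxS
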